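/- arXiv:1302.0071 — 8 statements merged into one kernel-verified Lean document; each statement's English description precedes it below -/
import Mathlib

section
/- Let F be a field whose characteristic is either zero or a prime p > h, where h ≥ 2 is an integer. Then the set A := {(x, x², …, x^h) : x ∈ F} is a B_h[1] set in the additive group (F^h, +); that is, for every s ∈ F^h there is at most one multiset {a₁, …, a_h} of elements of A with a₁ + ⋯ + a_h = s. -/
/-- `A` is a `B_h[g]` set in the additive commutative monoid `G`: every element `x` of `G`
has at most `g` representations as a sum of `h` elements of `A`, where representations
differing only in the order of summands are identified; i.e., for each `x : G` there are
at most `g` multisets of size `h`, with all elements in `A`, whose sum is `x`. -/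
def IsBhSet {G : Type*} [AddCommMonoid G] (A : Set G) (h g : ℕ) : Prop :=
  ∀ x : G, ∀ S : Finset (Multiset G),
    (∀ s ∈ S, Multiset.card s = h ∧ (∀ a ∈ s, a ∈ A) ∧ s.sum = x) → S.card ≤ g


open MvPolynomial in
theorem esymm_eq_aux {F : Type*} [Field F] (h : ℕ)
    (hc : ∀ k : ℕ, 0 < k → k ≤ h → (k : F) ≠ 0) (f g : Fin h → F)
    (hp : ∀ k, 0 < k → k ≤ h → ∑ i, f i ^ k = ∑ i, g i ^ k) (k : ℕ) (hk : k ≤ h) :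
    aeval f (esymm (Fin h) F k) = aeval g (esymm (Fin h) F k) := by
  induction k using Nat.strong_induction_on with
  | _ k ih =>
    rcases Nat.eq_zero_or_pos k with rfl | h0
    · simp
    · apply mul_left_cancel₀ (hc k h0 hk)
      have key := mul_esymm_eq_sum (Fin h) F k
      have h1 := congrArg (aeval f) key
      have h2 := congrArg (aeval g) key
      simp only [map_mul, map_natCast, map_sum, map_pow, map_neg, map_one] at h1 h2
      rw [h1, h2]
      congr 1
      apply Finset.sum_congr rfl
      intro a ha
      rw [Finset.mem_filter] at ha
      have ha1 := Finset.HasAntidiagonal.mem_antidiagonal.1 ha.1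
      have ha2 := ha.2
      rw [ih a.1 ha.2 (by omega)]
      congr 1
      simp only [psum, map_sum, map_pow, aeval_X]
      exact hp _ (by omega) (by omega)

theorem multiset_eq_aux {F : Type*} [Field F] (h : ℕ)
    (hc : ∀ k : ℕ, 0 < k → k ≤ h → (k : F) ≠ 0) (s t : Multiset F)
    (hs : Multiset.card s = h) (ht : Multiset.card t = h)
    (hp : ∀ k, 0 < k → k ≤ h → (s.map (· ^ k)).sum = (t.map (· ^ k)).sum) : s = t := by
  have ex : ∀ s : Multiset F, Multiset.card s = h →
      ∃ f : Fin h → F, s = Finset.univ.val.map f := by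
    rintro s rfl
    induction s using Quotient.inductionOn with
    | _ l => exact ⟨l.get, by
        have := Fin.univ_val_map l.get
        rw [List.ofFn_get] at this
        exact this.symm⟩
  obtain ⟨f, rfl⟩ := ex s hs
  obtain ⟨g, rfl⟩ := ex t ht
  have he := esymm_eq_aux h hc f g (by
    intro k h0 hk
    have := hp k h0 hk
    rw [Multiset.map_map, Multiset.map_map] at this
    exact this)
  simp only [MvPolynomial.aeval_esymm_eq_multiset_esymm] at he
  have := Multiset.prod_X_sub_X_eq_sum_esymm (Finset.univ.val.map f)
  have h2 := Multiset.prod_X_sub_X_eq_sum_esymm (Finset.univ.val.map g)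
  rw [← Polynomial.roots_multiset_prod_X_sub_C (Finset.univ.val.map f),
    ← Polynomial.roots_multiset_prod_X_sub_C (Finset.univ.val.map g), this, h2, hs, ht]
  congr 1
  apply Finset.sum_congr rfl
  intro j hj
  rw [he j (by simpa [Nat.lt_succ_iff] using hj)]

/-- If `F` is a field of characteristic zero or `p > h` (`h ≥ 2`), then
`{(x, x², …, x^h) : x ∈ F}` is a `B_h[1]` set in `(F^h, +)`. -/
theorem stmt0 {F : Type*} [Field F] (h : ℕ) (hh : 2 ≤ h)
    (hchar : ringChar F = 0 ∨ (Nat.Prime (ringChar F) ∧ h < ringChar F)) :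
    IsBhSet {v : Fin h → F | ∃ x : F, v = fun i => x ^ (i.val + 1)} h 1 := by
  have hc : ∀ k : ℕ, 0 < k → k ≤ h → (k : F) ≠ 0 := by
    intro k h0 hk hz
    have hd := (ringChar.spec F k).1 hz
    rcases hchar with h1 | ⟨_, h1⟩
    · rw [h1] at hd
      have := Nat.eq_zero_of_zero_dvd hd
      omega
    · have := Nat.le_of_dvd h0 hd
      omega
  intro x S hS
  have hform : ∀ s ∈ S, ∃ t : Multiset F, Multiset.card t = h ∧
      s = t.map (fun x => fun i : Fin h => x ^ (i.val + 1)) ∧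
      ∀ i : Fin h, (t.map (· ^ (i.val + 1))).sum = x i := by
    intro s hs
    obtain ⟨h1, h2, h3⟩ := hS s hs
    have hst : s = (s.map (fun v => v ⟨0, by omega⟩)).map
        (fun x => fun i : Fin h => x ^ (i.val + 1)) := by
      rw [Multiset.map_map]
      conv_lhs => rw [← Multiset.map_id s]
      apply Multiset.map_congr rfl
      intro v hv
      obtain ⟨y, rfl⟩ := h2 v hv
      simp
    refine ⟨_, by simpa using h1, hst, ?_⟩
    intro i
    rw [← h3]
    conv_rhs => rw [hst]
    generalize s.map (fun v => v ⟨0, by omega⟩) = t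
    have := map_multiset_sum (Pi.evalAddMonoidHom (fun _ : Fin h => F) i)
      (t.map (fun x => fun i : Fin h => x ^ (i.val + 1)))
    rw [Multiset.map_map] at this
    exact this.symm
  rw [Finset.card_le_one]
  intro a ha b hb
  obtain ⟨s, hs, rfl, hs2⟩ := hform a ha
  obtain ⟨t, ht, rfl, ht2⟩ := hform b hb
  rw [multiset_eq_aux h hc s t hs ht]
  intro k h0 hk
  have e := (hs2 ⟨k - 1, by omega⟩).trans (ht2 ⟨k - 1, by omega⟩).symm
  simpa [Nat.sub_add_cancel h0] using e
end

section
/- For every prime p, every integer h ≥ 2 with p > h, and every positive integer n, there exists a B_h[1] set with exactly pⁿ elements in the additive group ((ℤ/pℤ)^(h·n), +). -/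
theorem exists_fun_aux {F : Type*} (h : ℕ) (s : Multiset F) (hs : Multiset.card s = h) :
    ∃ f : Fin h → F, (Finset.univ : Finset (Fin h)).val.map f = s := by
  subst hs
  induction s using Quotient.inductionOn with
  | _ l =>
    refine ⟨fun i => l.get i, ?_⟩
    exact (Fin.univ_val_map (n := l.length) l.get).trans (by rw [List.ofFn_get]; rfl)

theorem esymm_aux {F : Type*} [Field F] (p h : ℕ) [CharP F p] (hph : h < p)
    (f g : Fin h → F) (hfg : ∀ k, 0 < k → k ≤ h → ∑ i, f i ^ k = ∑ i, g i ^ k) (k : ℕ)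
    (hk : k ≤ h) :
    MvPolynomial.aeval f (MvPolynomial.esymm (Fin h) F k) =
      MvPolynomial.aeval g (MvPolynomial.esymm (Fin h) F k) := by
  induction k using Nat.strong_induction_on with
  | _ k ih =>
    rcases Nat.eq_zero_or_pos k with rfl | hk0
    · simp
    have key := MvPolynomial.mul_esymm_eq_sum (Fin h) F k
    have h1 := congrArg (MvPolynomial.aeval f) key
    have h2 := congrArg (MvPolynomial.aeval g) key
    simp only [map_mul, map_sum, map_pow, map_neg, map_one, map_natCast] at h1 h2
    have hne : (k : F) ≠ 0 := by
      intro h0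
      have := Nat.le_of_dvd hk0 ((CharP.cast_eq_zero_iff F p k).1 h0)
      omega
    apply mul_left_cancel₀ hne
    rw [h1, h2]
    congr 1
    apply Finset.sum_congr rfl
    rintro ⟨a, b⟩ hab
    have hab1 : a + b = k := Finset.HasAntidiagonal.mem_antidiagonal.1 (Finset.mem_filter.1 hab).1
    have hab2 : a < k := by simpa using (Finset.mem_filter.1 hab).2
    have hb := hfg b (by omega) (by omega)
    rw [ih a (by omega) (by omega)]
    simp only [MvPolynomial.psum, map_sum, map_pow, MvPolynomial.aeval_X]
    rw [hb]

theorem multiset_aux {F : Type*} [Field F] (p h : ℕ) [CharP F p] (hph : h < p)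
    (s t : Multiset F) (hs : Multiset.card s = h) (ht : Multiset.card t = h)
    (hst : ∀ k, 0 < k → k ≤ h → (s.map (· ^ k)).sum = (t.map (· ^ k)).sum) : s = t := by
  obtain ⟨f, hf⟩ := exists_fun_aux h s hs
  obtain ⟨g, hg⟩ := exists_fun_aux h t ht
  have hfg : ∀ k, 0 < k → k ≤ h → ∑ i, f i ^ k = ∑ i, g i ^ k := by
    intro k h0 h1
    have := hst k h0 h1
    rw [← hf, ← hg, Multiset.map_map, Multiset.map_map] at this
    exact this
  have he : ∀ k ≤ h, s.esymm k = t.esymm k := by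
    intro k hk
    have := esymm_aux p h hph f g hfg k hk
    rw [MvPolynomial.aeval_esymm_eq_multiset_esymm, MvPolynomial.aeval_esymm_eq_multiset_esymm,
      hf, hg] at this
    exact this
  have hprod : (s.map fun a => Polynomial.X - Polynomial.C a).prod =
      (t.map fun a => Polynomial.X - Polynomial.C a).prod := by
    rw [Multiset.prod_X_sub_X_eq_sum_esymm, Multiset.prod_X_sub_X_eq_sum_esymm, hs, ht]
    apply Finset.sum_congr rfl
    intro k hk
    rw [he k (by simpa [Nat.lt_succ_iff] using hk)]
  have := congrArg Polynomial.roots hprod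
  rwa [Polynomial.roots_multiset_prod_X_sub_C, Polynomial.roots_multiset_prod_X_sub_C] at this

/-- For every prime `p`, every `h ≥ 2` with `p > h`, and every `n ≥ 1`,
there is a `B_h[1]` set with exactly `pⁿ` elements in `((ℤ/pℤ)^(h·n), +)`. -/
theorem stmt1 (p h n : ℕ) (hp : p.Prime) (hh : 2 ≤ h) (hph : h < p) (hn : 0 < n) :
    ∃ A : Finset (Fin (h * n) → ZMod p),
      IsBhSet (A : Set (Fin (h * n) → ZMod p)) h 1 ∧ A.card = p ^ n := by
  classical
  haveI : Fact p.Prime := ⟨hp⟩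
  let F := GaloisField p n
  haveI : Fintype F := Fintype.ofFinite F
  have hfr : Module.finrank (ZMod p) F = n := GaloisField.finrank p hn.ne'
  have hfin : Module.finrank (ZMod p) (Fin h → F) =
      Module.finrank (ZMod p) (Fin (h * n) → ZMod p) := by
    rw [Module.finrank_pi_fintype]
    simp [hfr]
  let e : (Fin h → F) ≃ₗ[ZMod p] (Fin (h * n) → ZMod p) := LinearEquiv.ofFinrankEq _ _ hfin
  let φ : F → (Fin h → F) := fun x i => x ^ (i.val + 1)
  let g : (Fin (h * n) → ZMod p) → F := fun y => e.symm y ⟨0, by omega⟩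
  have hg : ∀ x, g (e (φ x)) = x := by
    intro x
    simp [g, φ]
  refine ⟨Finset.univ.image (fun x => e (φ x)), ?_, ?_⟩
  · intro x S hS
    rw [Finset.card_le_one]
    have hrep : ∀ s ∈ S, s = (s.map g).map (fun x => e (φ x)) := by
      intro s hs
      rw [Multiset.map_map]
      conv_lhs => rw [← Multiset.map_id s]
      apply Multiset.map_congr rfl
      intro a ha
      have := (hS s hs).2.1 a ha
      simp only [Finset.coe_image, Set.mem_image] at this
      obtain ⟨y, -, rfl⟩ := this
      simp [hg]
    have hpow : ∀ s ∈ S, ∀ k (hk : k < h),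
        ((s.map g).map (· ^ (k + 1))).sum = e.symm x ⟨k, hk⟩ := by
      intro s hs k hk
      have h1 := (hS s hs).2.2
      rw [hrep s hs] at h1
      rw [← h1]
      let L : (Fin (h * n) → ZMod p) →+ F :=
        (Pi.evalAddMonoidHom (fun _ : Fin h => F) ⟨k, hk⟩).comp e.symm.toLinearMap.toAddMonoidHom
      have h2 := map_multiset_sum L ((s.map g).map (fun x => e (φ x)))
      rw [Multiset.map_map L] at h2
      refine Eq.trans ?_ h2.symm
      congr 1
      apply Multiset.map_congr rfl
      intro a _
      simp [L, φ]
    intro s hs t ht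
    rw [hrep s hs, hrep t ht]
    congr 1
    apply multiset_aux p h hph
    · simp [(hS s hs).1]
    · simp [(hS t ht).1]
    · intro k h0 h1
      obtain ⟨k, rfl⟩ : ∃ j, k = j + 1 := ⟨k - 1, by omega⟩
      rw [hpow s hs k (by omega), hpow t ht k (by omega)]
  · rw [Finset.card_image_of_injective _ (Function.LeftInverse.injective hg), Finset.card_univ,
      ← Nat.card_eq_fintype_card]
    exact GaloisField.card p n hn.ne'
end

section
/- Let F be a field whose characteristic is either zero or a prime p > h, where h ≥ 1 is an integer. If a₁, …, a_h and b₁, …, b_h are elements of F such that a₁^k + a₂^k + ⋯ + a_h^k = b₁^k + b₂^k + ⋯ + b_h^k for every k = 1, 2, …, h, then the multiset {a₁, …, a_h} equals the multiset {b₁, …, b_h}. -/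
theorem newton_multiset {F : Type*} [Field F] (a : Multiset F) (k : ℕ) :
    (k : F) * a.esymm k = (-1) ^ (k + 1) *
      ∑ x ∈ Finset.HasAntidiagonal.antidiagonal k with x.1 < k,
        (-1) ^ x.1 * a.esymm x.1 * (a.map (fun y => y ^ x.2)).sum := by
  obtain ⟨n, f, rfl⟩ : ∃ (n : ℕ) (f : Fin n → F), a = Finset.univ.val.map f := by
    induction a using Quotient.inductionOn with
    | h l =>
      refine ⟨l.length, l.get, ?_⟩
      simp
  have := congrArg (MvPolynomial.aeval f) (MvPolynomial.mul_esymm_eq_sum (Fin n) F k)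
  simp only [map_mul, map_natCast, map_pow, map_neg, map_one, map_sum,
    MvPolynomial.aeval_esymm_eq_multiset_esymm, MvPolynomial.psum, MvPolynomial.aeval_X] at this
  rw [this]
  simp only [Multiset.map_map, Function.comp_def]
  rfl

/-- In a field of characteristic zero or `p > h` (`h ≥ 1`), if two
multisets of `h` elements have equal power sums `∑ aᵢᵏ = ∑ bᵢᵏ` for all `k = 1, …, h`,
then the multisets are equal. -/
theorem stmt2 {F : Type*} [Field F] (h : ℕ) (hh : 1 ≤ h)
    (hchar : ringChar F = 0 ∨ (Nat.Prime (ringChar F) ∧ h < ringChar F))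
    (a b : Multiset F) (ha : Multiset.card a = h) (hb : Multiset.card b = h)
    (hpow : ∀ k : ℕ, 1 ≤ k → k ≤ h →
      (a.map (fun x => x ^ k)).sum = (b.map (fun x => x ^ k)).sum) :
    a = b := by
  have hne : ∀ k : ℕ, 1 ≤ k → k ≤ h → (k : F) ≠ 0 := by
    intro k h1 h2 h0
    have hd := (ringChar.spec F k).1 h0
    rcases hchar with hc | ⟨-, hc⟩
    · rw [hc] at hd
      have := Nat.eq_zero_of_zero_dvd hd
      omega
    · have := Nat.le_of_dvd (by omega) hd
      omega
  have he : ∀ k : ℕ, k ≤ h → a.esymm k = b.esymm k := by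
    intro k
    induction k using Nat.strong_induction_on with
    | _ k ih =>
      intro hk
      rcases Nat.eq_zero_or_pos k with rfl | hpos
      · simp [Multiset.esymm]
      · apply mul_left_cancel₀ (hne k hpos hk)
        rw [newton_multiset, newton_multiset]
        congr 1
        apply Finset.sum_congr rfl
        intro x hx
        rw [Finset.mem_filter, Finset.HasAntidiagonal.mem_antidiagonal] at hx
        rw [ih x.1 hx.2 (by omega), hpow x.2 (by omega) (by omega)]
  rw [← Polynomial.roots_multiset_prod_X_sub_C a, ← Polynomial.roots_multiset_prod_X_sub_C b,
    Multiset.prod_X_sub_X_eq_sum_esymm, Multiset.prod_X_sub_X_eq_sum_esymm, ha, hb]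
  refine congrArg Polynomial.roots ?_
  apply Finset.sum_congr rfl
  intro j hj
  rw [he j (by rw [Finset.mem_range] at hj; omega)]
end

section
/- Let φ : G → G′ be a homomorphism between abelian groups G and G′ whose kernel is finite of cardinality g′. If A ⊆ G is a B_h[g] set on G (h ≥ 2, g ≥ 1), then the image φ(A) is a B_h[g·g′] set on the subgroup φ(G) of G′ (equivalently, on G′). -/
/-- If `φ : G → G′` is a homomorphism of abelian groups with finite kernel
of cardinality `g′`, and `A` is a `B_h[g]` set on `G`, then `φ(A)` is a `B_h[g·g′]` set
on `G′`. -/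
theorem stmt4 {G G' : Type*} [AddCommGroup G] [AddCommGroup G'] (φ : G →+ G')
    (h g g' : ℕ) (hh : 2 ≤ h) (hg : 1 ≤ g)
    (hfin : (φ.ker : Set G).Finite) (hker : Nat.card φ.ker = g')
    (A : Set G) (hA : IsBhSet A h g) :
    IsBhSet (φ '' A) h (g * g') := by
  classical
  intro x S hS
  have hex : ∀ y : G', ∃ a : G, y ∈ φ '' A → a ∈ A ∧ φ a = y := by
    intro y
    by_cases hy : y ∈ φ '' A
    · obtain ⟨a, ha, e⟩ := hy
      exact ⟨a, fun _ => ⟨ha, e⟩⟩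
    · exact ⟨0, fun h => absurd h hy⟩
  choose f hf using hex
  have hback : ∀ s ∈ S, (s.map f).map φ = s := by
    intro s hs
    rw [Multiset.map_map]
    conv_rhs => rw [← Multiset.map_id s]
    exact Multiset.map_congr rfl fun a ha => (hf a ((hS s hs).2.1 a ha)).2
  have hsum : ∀ s ∈ S, φ (s.map f).sum = x := by
    intro s hs
    rw [map_multiset_sum, hback s hs, (hS s hs).2.2]
  rcases S.eq_empty_or_nonempty with rfl | ⟨s0, hs0⟩
  · simp
  have hK : hfin.toFinset.card = g' := by
    rw [← hker, ← Set.ncard_eq_toFinset_card _ hfin]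
    rfl
  rw [← hK]
  refine Finset.card_le_mul_card_image_of_maps_to
    (f := fun s : Multiset G' => (s.map f).sum - (s0.map f).sum) ?_ g ?_
  · intro s hs
    simp [AddMonoidHom.mem_ker, hsum s hs, hsum s0 hs0]
  · intro k _
    have hinj : Set.InjOn (Multiset.map f) (S : Set (Multiset G')) := by
      intro s hs t ht e
      rw [← hback s hs, ← hback t ht, e]
    rw [← Finset.card_image_of_injOn (f := Multiset.map f)
      (hinj.mono (by intro s hs; exact (Finset.mem_filter.1 hs).1))]
    apply hA (k + (s0.map f).sum)
    intro t ht
    obtain ⟨s, hs, rfl⟩ := Finset.mem_image.1 ht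
    obtain ⟨hs, e⟩ := Finset.mem_filter.1 hs
    refine ⟨by rw [Multiset.card_map, (hS s hs).1], ?_, by rw [← e]; abel⟩
    intro a ha
    obtain ⟨b, hb, rfl⟩ := Multiset.mem_map.1 ha
    exact (hf b ((hS s hs).2.1 b hb)).1
end

section
/- Let h ≥ 2, g ≥ 1, d ≥ 1 be integers, let m₁, …, m_d be positive integers, and let g₁, …, g_d be positive integers with gᵢ dividing mᵢ for each i. If B is a B_h[g] set on the group (ℤ/m₁ℤ × ⋯ × ℤ/m_dℤ, +), then the set A := {(b₁ mod (m₁/g₁), …, b_d mod (m_d/g_d)) : (b₁, …, b_d) ∈ B}, obtained by reducing each coordinate of each element of B modulo mᵢ/gᵢ, is a B_h[g·g₁·g₂⋯g_d] set on the group (ℤ/(m₁/g₁)ℤ × ⋯ × ℤ/(m_d/g_d)ℤ, +). -/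
theorem fiber_card_aux (n k : ℕ) (hn : 0 < n) (hk : 0 < k) (hd : k ∣ n) [NeZero n]
    (a : ZMod (n / k)) :
    (Finset.univ.filter (fun z : ZMod n => ((z.val : ℕ) : ZMod (n / k)) = a)).card ≤ k := by
  obtain ⟨q, rfl⟩ := hd
  have hq : 0 < q := Nat.pos_of_mul_pos_left hn
  have e : k * q / k = q := Nat.mul_div_cancel_left q hk
  have key : (Finset.univ.filter
      (fun z : ZMod (k * q) => ((z.val : ℕ) : ZMod (k * q / k)) = a)).card
      ≤ (Finset.range k).card := by
    refine Finset.card_le_card_of_injOn (fun z => z.val / q) ?_ ?_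
    · intro z _
      simp only [Finset.coe_range, Set.mem_Iio]
      exact (Nat.div_lt_iff_lt_mul hq).2 (ZMod.val_lt z)
    · intro z hz w hw hzw
      simp only [Finset.coe_filter, Finset.mem_univ, true_and, Set.mem_ofPred_eq] at hz hw hzw
      have h1 := (ZMod.natCast_eq_natCast_iff _ _ _).1 (hz.trans hw.symm)
      rw [e] at h1
      apply ZMod.val_injective
      rw [← Nat.div_add_mod z.val q, ← Nat.div_add_mod w.val q, hzw, h1]
  simpa using key

theorem stmt5 (d h g : ℕ) (hd : 1 ≤ d) (hh : 2 ≤ h) (hg : 1 ≤ g)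
    (m gd : Fin d → ℕ) (hm : ∀ i, 0 < m i) (hgd : ∀ i, 0 < gd i)
    (hdvd : ∀ i, gd i ∣ m i)
    (B : Set (∀ i, ZMod (m i))) (hB : IsBhSet B h g) :
    IsBhSet
      ((fun b : ∀ i, ZMod (m i) => fun i : Fin d =>
          (((b i).val : ℕ) : ZMod (m i / gd i))) '' B)
      h (g * ∏ i, gd i) := by
  classical
  haveI : ∀ i, NeZero (m i) := fun i => ⟨(hm i).ne'⟩
  set f : (∀ i, ZMod (m i)) → (∀ i, ZMod (m i / gd i)) :=
    fun b i => (((b i).val : ℕ) : ZMod (m i / gd i)) with hf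
  have hadd : ∃ φ : (∀ i, ZMod (m i)) →+ (∀ i, ZMod (m i / gd i)), ∀ b, φ b = f b := by
    refine ⟨⟨⟨f, ?_⟩, ?_⟩, fun _ => rfl⟩
    · funext i; simp [hf]
    · intro x y; funext i
      have hq : m i / gd i ∣ m i := Nat.div_dvd_of_dvd (hdvd i)
      simp only [hf, ZMod.natCast_val, Pi.add_apply]
      exact ZMod.cast_add hq _ _
  obtain ⟨φ, hφ⟩ := hadd
  intro x S hS
  have hsec : ∀ a, ∃ b, a ∈ f '' B → b ∈ B ∧ f b = a := by
    intro a
    by_cases ha : a ∈ f '' B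
    · obtain ⟨b, hb, hb'⟩ := ha
      exact ⟨b, fun _ => ⟨hb, hb'⟩⟩
    · exact ⟨0, fun h => absurd h ha⟩
  choose σ hσ using hsec
  have hlift : ∀ s ∈ S, (s.map σ).map f = s := by
    intro s hs
    rw [Multiset.map_map]
    conv_rhs => rw [← Multiset.map_id s]
    exact Multiset.map_congr rfl fun a ha => (hσ a ((hS s hs).2.1 a ha)).2
  have hinj : Set.InjOn (fun s => Multiset.map σ s) (S : Set (Multiset _)) := by
    intro s hs t ht hst
    rw [← hlift s hs, ← hlift t ht]
    exact congrArg (Multiset.map f) hst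
  have h1 := Finset.card_le_mul_card_image (f := fun s => (Multiset.map σ s).sum) S g (by
    intro y _
    rw [← Finset.card_image_of_injOn (hinj.mono (by intro s hs; exact (Finset.mem_filter.1 hs).1))]
    apply hB y
    intro t ht
    obtain ⟨s, hs, rfl⟩ := Finset.mem_image.1 ht
    obtain ⟨hs, hy⟩ := Finset.mem_filter.1 hs
    refine ⟨by simpa using (hS s hs).1, ?_, hy⟩
    intro b hb
    obtain ⟨a, ha, rfl⟩ := Multiset.mem_map.1 hb
    exact (hσ a ((hS s hs).2.1 a ha)).1)
  refine h1.trans (Nat.mul_le_mul_left g ?_)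
  have hsub : S.image (fun s => (Multiset.map σ s).sum) ⊆
      Fintype.piFinset (fun i => Finset.univ.filter
        (fun z : ZMod (m i) => ((z.val : ℕ) : ZMod (m i / gd i)) = x i)) := by
    intro y hy
    obtain ⟨s, hs, rfl⟩ := Finset.mem_image.1 hy
    have : f (Multiset.map σ s).sum = x := by
      rw [← hφ, map_multiset_sum, ← (hS s hs).2.2]
      congr 1
      conv_rhs => rw [← hlift s hs]
      exact Multiset.map_congr rfl fun a _ => hφ a
    rw [Fintype.mem_piFinset]
    intro i
    simp only [Finset.mem_filter, Finset.mem_univ, true_and]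
    exact congrFun this i
  refine (Finset.card_le_card hsub).trans ?_
  rw [Fintype.card_piFinset]
  exact Finset.prod_le_prod' fun i _ => fiber_card_aux _ _ (hm i) (hgd i) (hdvd i) _
end

section
/- Let p be a prime, n a positive integer, and q = pⁿ. Let α and β be primitive elements (generators) of the cyclic multiplicative group F_q^× of the finite field with q elements, and let a ∈ F_q^×. Define log_β : F_q^× → ℤ/(q−1)ℤ to be the discrete logarithm to base β (so β^{log_β(x)} = x). Then the set G(α, β, a) := {(i mod (q−1), log_β(a − α^i)) : i = 1, …, q−1, α^i ≠ a} is a B_2[1] (Sidon) set in the group (ℤ/(q−1)ℤ × ℤ/(q−1)ℤ, +). -/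
/-- Golomb's construction: for `q = pⁿ`, primitive elements `α, β` of
`F_q^×`, `a ∈ F_q^×`, and `log_β` the discrete logarithm to base `β`, the set
`{(i, log_β(a − αⁱ)) : i = 1, …, q−1, αⁱ ≠ a}` is a Sidon (`B_2[1]`) set in
`(ℤ/(q−1)ℤ × ℤ/(q−1)ℤ, +)`. -/
theorem stmt7 (p n q : ℕ) (hp : p.Prime) (hn : 0 < n) (hq : q = p ^ n)
    {F : Type*} [Field F] [Fintype F] (hF : Fintype.card F = q)
    (α β : Fˣ)
    (hα : ∀ u : Fˣ, u ∈ Subgroup.zpowers α)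
    (hβ : ∀ u : Fˣ, u ∈ Subgroup.zpowers β)
    (a : Fˣ)
    (logβ : F → ZMod (q - 1))
    (hlog : ∀ x : F, x ≠ 0 → (β : F) ^ (logβ x).val = x) :
    IsBhSet
      {v : ZMod (q - 1) × ZMod (q - 1) | ∃ i : ℕ, 1 ≤ i ∧ i ≤ q - 1 ∧
        (α : F) ^ i ≠ (a : F) ∧
        v = ((i : ZMod (q - 1)), logβ ((a : F) - (α : F) ^ i))} 2 1 := by
  have hq1 : 1 < q := hF ▸ Fintype.one_lt_card
  have : NeZero (q - 1) := ⟨by omega⟩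
  have hcard : Nat.card Fˣ = q - 1 := by
    rw [Nat.card_units, Nat.card_eq_fintype_card, hF]
  have hord : orderOf α = q - 1 := by
    rw [orderOf_eq_card_of_forall_mem_zpowers hα, hcard]
  have hordβ : orderOf β = q - 1 := by
    rw [orderOf_eq_card_of_forall_mem_zpowers hβ, hcard]
  have hadd : ∀ γ : Fˣ, orderOf γ = q - 1 → ∀ z w : ZMod (q - 1),
      (γ : F) ^ (z + w).val = (γ : F) ^ z.val * (γ : F) ^ w.val := by
    intro γ hγ z w
    rw [ZMod.val_add, ← pow_add]
    have := pow_mod_orderOf γ (z.val + w.val)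
    rw [hγ] at this
    exact_mod_cast congrArg (Units.val) this
  have hinj : ∀ z w : ZMod (q - 1), (α : F) ^ z.val = (α : F) ^ w.val → z = w := by
    intro z w h
    have h' : α ^ z.val = α ^ w.val := by
      ext; push_cast; exact h
    apply ZMod.val_injective
    exact pow_injOn_Iio_orderOf (by simpa [hord] using z.val_lt)
      (by simpa [hord] using w.val_lt) h'
  intro t S hS
  have key : ∀ v : ZMod (q - 1) × ZMod (q - 1), (∃ i : ℕ, 1 ≤ i ∧ i ≤ q - 1 ∧
        (α : F) ^ i ≠ (a : F) ∧
        v = ((i : ZMod (q - 1)), logβ ((a : F) - (α : F) ^ i))) →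
      v.2 = logβ ((a : F) - (α : F) ^ v.1.val) ∧
      (β : F) ^ v.2.val = (a : F) - (α : F) ^ v.1.val := by
    rintro v ⟨i, -, -, hne, rfl⟩
    have hi : (α : F) ^ (i : ZMod (q - 1)).val = (α : F) ^ i := by
      rw [ZMod.val_natCast, ← hord]
      exact_mod_cast congrArg (Units.val) (pow_mod_orderOf α i)
    simp only [hi, true_and]
    exact hlog _ (sub_ne_zero.mpr (Ne.symm hne))
  have ext' : ∀ u v : ZMod (q - 1) × ZMod (q - 1),
      u.2 = logβ ((a : F) - (α : F) ^ u.1.val) → v.2 = logβ ((a : F) - (α : F) ^ v.1.val) →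
      (α : F) ^ u.1.val = (α : F) ^ v.1.val → u = v := by
    intro u v hu hv h
    exact Prod.ext (hinj _ _ h) (by rw [hu, hv, h])
  rw [Finset.card_le_one]
  intro s hs s' hs'
  obtain ⟨hc, hm, hsum⟩ := hS s hs
  obtain ⟨hc', hm', hsum'⟩ := hS s' hs'
  obtain ⟨u, v, rfl⟩ := Multiset.card_eq_two.mp hc
  obtain ⟨u', v', rfl⟩ := Multiset.card_eq_two.mp hc'
  obtain ⟨u1, u2⟩ := key u (hm u (by simp))
  obtain ⟨v1, v2⟩ := key v (hm v (by simp))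
  obtain ⟨u1', u2'⟩ := key u' (hm' u' (by simp))
  obtain ⟨v1', v2'⟩ := key v' (hm' v' (by simp))
  have he : u + v = u' + v' := by
    simpa using hsum.trans hsum'.symm
  have e1 : u.1 + v.1 = u'.1 + v'.1 := congrArg Prod.fst he
  have e2 : u.2 + v.2 = u'.2 + v'.2 := congrArg Prod.snd he
  have p1 : (α : F) ^ u.1.val * (α : F) ^ v.1.val = (α : F) ^ u'.1.val * (α : F) ^ v'.1.val := by
    rw [← hadd α hord, ← hadd α hord, e1]
  have p2 : (β : F) ^ u.2.val * (β : F) ^ v.2.val = (β : F) ^ u'.2.val * (β : F) ^ v'.2.val := by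
    rw [← hadd β hordβ, ← hadd β hordβ, e2]
  rw [u2, v2, u2', v2'] at p2
  have hs2 : (α : F) ^ u.1.val + (α : F) ^ v.1.val
      = (α : F) ^ u'.1.val + (α : F) ^ v'.1.val := by
    apply mul_left_cancel₀ a.ne_zero
    linear_combination p1 - p2
  have hz : ((α : F) ^ u.1.val - (α : F) ^ u'.1.val)
      * ((α : F) ^ u.1.val - (α : F) ^ v'.1.val) = 0 := by
    linear_combination (α : F) ^ u.1.val * hs2 - p1
  rcases mul_eq_zero.mp hz with h | h
  · have h := sub_eq_zero.mp h
    have hv : (α : F) ^ v.1.val = (α : F) ^ v'.1.val := by linear_combination hs2 - h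
    rw [ext' u u' u1 u1' h, ext' v v' v1 v1' hv]
  · have h := sub_eq_zero.mp h
    have hv : (α : F) ^ v.1.val = (α : F) ^ u'.1.val := by linear_combination hs2 - h
    rw [ext' u v' u1 v1' h, ext' v u' v1 u1' hv]
    exact Multiset.pair_comm _ _
end

section
/- Let q be a prime power, let α be a primitive element of the cyclic group F_q^×, and let a ∈ F_q^×. Then the set {i ∈ {1, …, q−1} : α^i ≠ a} has exactly q − 2 elements, and consequently the Golomb set G(α, β, a) = {(i mod (q−1), log_β(a − α^i)) : i = 1, …, q−1, α^i ≠ a} (for β a primitive element of F_q^× and log_β the discrete logarithm to base β) has exactly q − 2 elements; hence there exists a Sidon (B_2[1]) set of cardinality q − 2 in the group (ℤ/(q−1)ℤ × ℤ/(q−1)ℤ, +). -/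
/-- For a prime power `q`, a primitive element `α` of `F_q^×` and
`a ∈ F_q^×`, the set `{i ∈ {1, …, q−1} : αⁱ ≠ a}` has exactly `q − 2` elements; hence the
Golomb set `G(α, β, a)` has exactly `q − 2` elements, and there exists a Sidon (`B_2[1]`)
set of cardinality `q − 2` in `(ℤ/(q−1)ℤ × ℤ/(q−1)ℤ, +)`. -/
theorem stmt8 (p n q : ℕ) (hp : p.Prime) (hn : 0 < n) (hq : q = p ^ n)
    {F : Type*} [Field F] [Fintype F] (hF : Fintype.card F = q)
    (α β : Fˣ)
    (hα : ∀ u : Fˣ, u ∈ Subgroup.zpowers α)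
    (hβ : ∀ u : Fˣ, u ∈ Subgroup.zpowers β)
    (a : Fˣ)
    (logβ : F → ZMod (q - 1))
    (hlog : ∀ x : F, x ≠ 0 → (β : F) ^ (logβ x).val = x) :
    {i : ℕ | 1 ≤ i ∧ i ≤ q - 1 ∧ (α : F) ^ i ≠ (a : F)}.ncard = q - 2 ∧
    {v : ZMod (q - 1) × ZMod (q - 1) | ∃ i : ℕ, 1 ≤ i ∧ i ≤ q - 1 ∧
        (α : F) ^ i ≠ (a : F) ∧
        v = ((i : ZMod (q - 1)), logβ ((a : F) - (α : F) ^ i))}.ncard = q - 2 ∧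
    ∃ S : Set (ZMod (q - 1) × ZMod (q - 1)), IsBhSet S 2 1 ∧ S.ncard = q - 2 := by
  have hq2 : 2 ≤ q := by
    rw [← hF]; exact Fintype.one_lt_card
  obtain ⟨N, rfl⟩ : ∃ N, q = N + 1 := ⟨q - 1, by omega⟩
  have e1 : N + 1 - 1 = N := by omega
  have hN1 : 1 ≤ N := by omega
  have hord : ∀ γ : Fˣ, (∀ u : Fˣ, u ∈ Subgroup.zpowers γ) → orderOf (γ : F) = N := by
    intro γ h
    classical
    rw [orderOf_units, orderOf_eq_card_of_forall_mem_zpowers h, Nat.card_eq_fintype_card,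
      Fintype.card_units, hF, e1]
  have hA := hord α hα
  have hB := hord β hβ
  revert logβ
  rw [e1]
  intro logβ hlog
  haveI : NeZero N := ⟨by omega⟩
  have hinj : ∀ γ : F, orderOf γ = N → ∀ z w : ZMod N, γ ^ z.val = γ ^ w.val → z = w := by
    intro γ h z w hzw
    apply ZMod.val_injective N
    exact pow_injOn_Iio_orderOf (by simp [h, ZMod.val_lt]) (by simp [h, ZMod.val_lt]) hzw
  have hmod : ∀ γ : F, orderOf γ = N → ∀ k : ℕ, γ ^ (k % N) = γ ^ k := by
    intro γ h k
    conv_lhs => rw [← h]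
    rw [pow_mod_orderOf]
  have hadd : ∀ γ : F, orderOf γ = N → ∀ z w : ZMod N,
      γ ^ (z + w).val = γ ^ z.val * γ ^ w.val := by
    intro γ h z w
    rw [ZMod.val_add, ← pow_add]
    exact hmod γ h _
  have hcast : ∀ γ : F, orderOf γ = N → ∀ i : ℕ, γ ^ ((i : ZMod N)).val = γ ^ i := by
    intro γ h i
    rw [ZMod.val_natCast]
    conv_lhs => rw [← h]
    rw [pow_mod_orderOf]
  have hci : ∀ i j : ℕ, 1 ≤ i → i ≤ N → 1 ≤ j → j ≤ N → (i : ZMod N) = j → i = j := by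
    intro i j hi hi' hj hj' h
    have h2 := (ZMod.natCast_eq_natCast_iff i j N).1 h
    have h3 : (i - 1) ≡ (j - 1) [MOD N] := by
      apply Nat.ModEq.add_right_cancel' 1
      rwa [Nat.sub_add_cancel hi, Nat.sub_add_cancel hj]
    have := Nat.ModEq.eq_of_lt_of_lt h3 (by omega) (by omega)
    omega
  have hex : ∃ i, 1 ≤ i ∧ i ≤ N ∧ (α : F) ^ i = a := by
    have h := hα a
    rw [← mem_powers_iff_mem_zpowers] at h
    obtain ⟨k, hk⟩ := h
    have hk' : (α : F) ^ k = a := by rw [← hk]; simp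
    by_cases h0 : k % N = 0
    · refine ⟨N, hN1, le_rfl, ?_⟩
      rw [← hk', ← pow_mod_orderOf (α : F) k, ← pow_mod_orderOf (α : F) N, hA, h0]
      simp
    · refine ⟨k % N, by omega, (Nat.mod_lt _ (by omega)).le, ?_⟩
      conv_lhs => rw [← hA]
      rw [pow_mod_orderOf, hk']
  obtain ⟨i0, h01, h0N, hi0⟩ := hex
  have hc1 : {i : ℕ | 1 ≤ i ∧ i ≤ N ∧ (α : F) ^ i ≠ (a : F)}.ncard = N + 1 - 2 := by
    have : {i : ℕ | 1 ≤ i ∧ i ≤ N ∧ (α : F) ^ i ≠ (a : F)}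
        = (((Finset.Icc 1 N).erase i0 : Finset ℕ) : Set ℕ) := by
      ext i
      simp only [Set.mem_setOf_eq, Finset.coe_erase, Finset.coe_Icc, Set.mem_diff, Set.mem_Icc,
        Set.mem_singleton_iff]
      constructor
      · rintro ⟨h1, h2, h3⟩
        exact ⟨⟨h1, h2⟩, fun h => h3 (h ▸ hi0)⟩
      · rintro ⟨⟨h1, h2⟩, h3⟩
        refine ⟨h1, h2, fun h => h3 ?_⟩
        apply hci i i0 h1 h2 h01 h0N
        apply hinj _ hA
        rw [hcast _ hA, hcast _ hA, h, hi0]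
    rw [this, Set.ncard_coe_finset, Finset.card_erase_of_mem (by simp [h01, h0N])]
    simp
  have hc2 : {v : ZMod N × ZMod N | ∃ i : ℕ, 1 ≤ i ∧ i ≤ N ∧
        (α : F) ^ i ≠ (a : F) ∧
        v = ((i : ZMod N), logβ ((a : F) - (α : F) ^ i))}.ncard = N + 1 - 2 := by
    rw [← hc1]
    rw [← Set.ncard_image_of_injOn (s := {i : ℕ | 1 ≤ i ∧ i ≤ N ∧ (α : F) ^ i ≠ (a : F)})
      (f := fun i : ℕ => ((i : ZMod N), logβ ((a : F) - (α : F) ^ i)))]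
    · congr 1
      ext v
      simp only [Set.mem_setOf_eq, Set.mem_image]
      constructor
      · rintro ⟨i, h1, h2, h3, h4⟩
        exact ⟨i, ⟨h1, h2, h3⟩, h4.symm⟩
      · rintro ⟨i, ⟨h1, h2, h3⟩, h4⟩
        exact ⟨i, h1, h2, h3, h4.symm⟩
    · rintro i ⟨h1, h2, -⟩ j ⟨h3, h4, -⟩ h
      exact hci i j h1 h2 h3 h4 (congrArg Prod.fst h)
  refine ⟨hc1, hc2, _, ?_, hc2⟩
  set S := {v : ZMod N × ZMod N | ∃ i : ℕ, 1 ≤ i ∧ i ≤ N ∧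
        (α : F) ^ i ≠ (a : F) ∧
        v = ((i : ZMod N), logβ ((a : F) - (α : F) ^ i))} with hS
  have hmem : ∀ v ∈ S, (β : F) ^ v.2.val = a - (α : F) ^ v.1.val := by
    rintro v ⟨i, h1, h2, h3, rfl⟩
    simp only
    rw [hcast _ hA, hlog _ (sub_ne_zero.2 (Ne.symm h3))]
  have hSi : ∀ v ∈ S, ∀ w ∈ S, (α : F) ^ v.1.val = (α : F) ^ w.1.val → v = w := by
    intro v hv w hw h
    apply Prod.ext
    · exact hinj _ hA _ _ h
    · apply hinj _ hB
      rw [hmem v hv, hmem w hw, h]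
  intro x T hT
  rw [Finset.card_le_one]
  intro s hs t ht
  obtain ⟨cs, ms, ss⟩ := hT s hs
  obtain ⟨ct, mt, st⟩ := hT t ht
  obtain ⟨u, v, rfl⟩ := Multiset.card_eq_two.1 cs
  obtain ⟨u', v', rfl⟩ := Multiset.card_eq_two.1 ct
  have hu : u ∈ S := ms u (by simp)
  have hv : v ∈ S := ms v (by simp)
  have hu' : u' ∈ S := mt u' (by simp)
  have hv' : v' ∈ S := mt v' (by simp)
  have hsum : u + v = u' + v' := by
    have := ss.trans st.symm
    simpa using this
  have h1 : (α : F) ^ u.1.val * (α : F) ^ v.1.val = (α : F) ^ u'.1.val * (α : F) ^ v'.1.val := by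
    rw [← hadd _ hA, ← hadd _ hA]
    have := congrArg Prod.fst hsum
    simp only [Prod.fst_add] at this
    rw [this]
  have h2 : (β : F) ^ u.2.val * (β : F) ^ v.2.val = (β : F) ^ u'.2.val * (β : F) ^ v'.2.val := by
    rw [← hadd _ hB, ← hadd _ hB]
    have := congrArg Prod.snd hsum
    simp only [Prod.snd_add] at this
    rw [this]
  rw [hmem u hu, hmem v hv, hmem u' hu', hmem v' hv'] at h2
  have h3 : (α : F) ^ u.1.val + (α : F) ^ v.1.val = (α : F) ^ u'.1.val + (α : F) ^ v'.1.val := by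
    apply mul_left_cancel₀ a.ne_zero
    linear_combination h1 - h2
  have h4 : ((α : F) ^ u.1.val - (α : F) ^ u'.1.val) *
      ((α : F) ^ u.1.val - (α : F) ^ v'.1.val) = 0 := by
    linear_combination (α : F) ^ u.1.val * h3 - h1
  rcases mul_eq_zero.1 h4 with h5 | h5
  · have e := hSi u hu u' hu' (sub_eq_zero.1 h5)
    subst e
    rw [add_left_cancel hsum]
  · have e := hSi u hu v' hv' (sub_eq_zero.1 h5)
    subst e
    rw [add_comm u' u] at hsum
    rw [add_left_cancel hsum]
    exact Multiset.pair_comm _ _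
end

section
/- Let d ≥ 2, N ≥ 2, h ≥ 2 and g ≥ 1 be integers. Then F_h¹(N^d, g) ≤ F_h^d(N, g); that is, the maximum cardinality of a B_h[g] set of integers contained in {0, 1, …, N^d − 1} ⊆ ℤ is at most the maximum cardinality of a B_h[g] subset of {0, 1, …, N−1}^d ⊆ ℤ^d. -/
theorem digit_sum_aux (N : ℤ) (hN : 0 < N) (a : ℤ) (d : ℕ) :
    ∑ i ∈ Finset.range d, (a / N ^ i % N) * N ^ i = a % N ^ d := by
  induction d with
  | zero => simp
  | succ k ih =>
    rw [Finset.sum_range_succ, ih]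
    have hk : 0 < N ^ k := pow_pos hN k
    have h1 := Int.mul_ediv_add_emod a (N ^ k)
    have h2 := Int.mul_ediv_add_emod a (N ^ (k + 1))
    have h3 := Int.mul_ediv_add_emod (a / N ^ k) N
    have h4 : a / N ^ k / N = a / N ^ (k + 1) := by
      rw [pow_succ, Int.ediv_ediv_of_nonneg hk.le]
    rw [h4] at h3
    have h5 : N ^ (k + 1) = N ^ k * N := pow_succ N k
    generalize a / N ^ (k + 1) = q at *
    generalize a % N ^ (k + 1) = r at *
    rw [h5] at h2
    linear_combination h1 - h2 + N ^ k * h3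

/-- `F_h¹(N^d, g) ≤ F_h^d(N, g)`: the maximum size of a `B_h[g]` set of
integers contained in `{0, …, N^d − 1}` is at most the maximum size of a `B_h[g]` subset
of the box `{0, …, N−1}^d ⊆ ℤ^d`. -/
theorem stmt9 (d N h g : ℕ) (hd : 2 ≤ d) (hN : 2 ≤ N) (hh : 2 ≤ h) (hg : 1 ≤ g) :
    sSup {k : ℕ | ∃ A : Finset ℤ, (A : Set ℤ) ⊆ Set.Icc 0 ((N : ℤ) ^ d - 1) ∧
        IsBhSet (A : Set ℤ) h g ∧ A.card = k} ≤
    sSup {k : ℕ | ∃ A : Finset (Fin d → ℤ),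
        (∀ v ∈ A, ∀ i : Fin d, (0 : ℤ) ≤ v i ∧ v i ≤ (N : ℤ) - 1) ∧
        IsBhSet (A : Set (Fin d → ℤ)) h g ∧ A.card = k} := by
  set dig : ℤ → (Fin d → ℤ) := fun a i => a / (N : ℤ) ^ (i : ℕ) % (N : ℤ) with hdig
  let φ : (Fin d → ℤ) →+ ℤ :=
    { toFun := fun v => ∑ i, v i * (N : ℤ) ^ (i : ℕ)
      map_zero' := by simp
      map_add' := by
        intro x y
        simp [add_mul, Finset.sum_add_distrib] }
  have hNpos : (0 : ℤ) < N := by exact_mod_cast (by omega : 0 < N)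
  have hφ : ∀ a : ℤ, a ∈ Set.Icc 0 ((N : ℤ) ^ d - 1) → φ (dig a) = a := by
    intro a ha
    have h1 : φ (dig a) = ∑ i : Fin d, (a / (N : ℤ) ^ (i : ℕ) % N) * (N : ℤ) ^ (i : ℕ) := rfl
    rw [h1, Fin.sum_univ_eq_sum_range (fun i => (a / (N : ℤ) ^ i % N) * (N : ℤ) ^ i) d,
      digit_sum_aux _ hNpos]
    exact Int.emod_eq_of_lt ha.1 (by linarith [ha.2])
  apply csSup_le'
  rintro k ⟨A, hA, hB, rfl⟩
  apply le_csSup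
  · refine ⟨(Fintype.piFinset (fun _ : Fin d => Finset.Icc (0 : ℤ) ((N : ℤ) - 1))).card, ?_⟩
    rintro k ⟨C, hC, -, rfl⟩
    apply Finset.card_le_card
    intro v hv
    rw [Fintype.mem_piFinset]
    intro i
    exact Finset.mem_Icc.2 (hC v hv i)
  · refine ⟨A.image dig, ?_, ?_, ?_⟩
    · intro v hv i
      obtain ⟨a, -, rfl⟩ := Finset.mem_image.1 hv
      have h1 := Int.emod_nonneg (a / (N : ℤ) ^ (i : ℕ)) hNpos.ne'
      have h2 := Int.emod_lt_of_pos (a / (N : ℤ) ^ (i : ℕ)) hNpos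
      exact ⟨h1, by simp only [hdig]; omega⟩
    · intro x S hS
      have hinv : ∀ s ∈ S, (s.map φ).map dig = s := by
        intro s hs
        rw [Multiset.map_map]
        conv_rhs => rw [← Multiset.map_id s]
        apply Multiset.map_congr rfl
        intro v hv
        obtain ⟨a, ha, rfl⟩ := Finset.mem_image.1 (Finset.mem_coe.1 ((hS s hs).2.1 v hv))
        simp only [Function.comp, id, hφ a (hA ha)]
      have hcard : (S.image (Multiset.map φ)).card = S.card := by
        apply Finset.card_image_of_injOn
        intro s hs t ht hst
        rw [← hinv s hs, ← hinv t ht]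
        exact congrArg _ hst
      rw [← hcard]
      apply hB (φ x)
      intro t ht
      obtain ⟨s, hs, rfl⟩ := Finset.mem_image.1 ht
      obtain ⟨h1, h2, h3⟩ := hS s hs
      refine ⟨by simpa using h1, ?_, by rw [← h3, map_multiset_sum]⟩
      intro b hb
      obtain ⟨v, hv, rfl⟩ := Multiset.mem_map.1 hb
      obtain ⟨a, ha, rfl⟩ := Finset.mem_image.1 (Finset.mem_coe.1 (h2 v hv))
      rw [hφ a (hA ha)]
      exact ha
    · apply Finset.card_image_of_injOn
      intro a ha b hb hab
      rw [← hφ a (hA ha), ← hφ b (hA hb)]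
      exact congrArg _ hab
end
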